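/- arXiv:0808.2553 — 4 statements merged into one kernel-verified Lean document; each statement's English description precedes it below -/
import Mathlib

section
/- Let η, ε : F ⊣ U : B → A be an adjunction, T = (UF, η, UεF) the induced monad on A, F^T ⊣ U^T : A^T → A the free–forgetful adjunction for T, and a₀ an object of A. For any monomorphism i_a : a → UF(a₀) = U^T F^T(a₀), the morphism ξ^F_{i_a} = ε_{F(a₀)} ∘ F(i_a) : F(a) → F(a₀) is an isomorphism if and only if the morphism ξ^{F^T}_{i_a} = ε^T_{F^T(a₀)} ∘ F^T(i_a) : F^T(a) → F^T(a₀) is an isomorphism. -/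
open CategoryTheory

theorem isIso_of_isIso_map_free {A : Type*} {B : Type*} [Category A] [Category B]
    {F : A ⥤ B} {U : B ⥤ A} (adj : F ⊣ U) {x y : A}
    (f : F.obj x ⟶ F.obj y) (hf : IsIso (U.map f)) : IsIso f := by
  obtain ⟨z, hz⟩ : ∃ z : F.obj y ⟶ F.obj x,
      adj.unit.app y ≫ U.map z = adj.unit.app y ≫ inv (U.map f) :=
    ⟨(adj.homEquiv _ _).symm (adj.unit.app y ≫ inv (U.map f)),
      (adj.homEquiv_unit _ _ _).symm.trans (Equiv.apply_symm_apply _ _)⟩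
  have h1 : z ≫ f = 𝟙 _ := by
    apply (adj.homEquiv _ _).injective
    rw [adj.homEquiv_unit, adj.homEquiv_unit, U.map_comp, ← Category.assoc, hz]
    simp
  have h2 : U.map z = inv (U.map f) := by
    apply IsIso.eq_inv_of_inv_hom_id
    rw [← U.map_comp, h1, U.map_id]
  have h3 : f ≫ z = 𝟙 _ := by
    apply (adj.homEquiv _ _).injective
    rw [adj.homEquiv_unit, adj.homEquiv_unit, U.map_comp, h2]
    simp
  exact ⟨z, h3, h1⟩

/-- Let `η, ε : F ⊣ U : B → A` be an adjunction, `T = (UF, η, UεF)` the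
induced monad on `A`, `F^T ⊣ U^T : A^T → A` the free–forgetful adjunction for `T`, and
`a₀` an object of `A`.  For any monomorphism `i : x ⟶ UF(a₀) = U^T F^T(a₀)`, the morphism
`ξ^F_i = ε_{F(a₀)} ∘ F(i) : F(x) ⟶ F(a₀)` is an isomorphism if and only if the morphism
`ξ^{F^T}_i = ε^T_{F^T(a₀)} ∘ F^T(i) : F^T(x) ⟶ F^T(a₀)` is an isomorphism. -/
theorem stmt_2 {A : Type*} {B : Type*} [Category A] [Category B]
    {F : A ⥤ B} {U : B ⥤ A} (adj : F ⊣ U) (a₀ : A) {x : A}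
    (i : x ⟶ U.obj (F.obj a₀)) [Mono i] :
    IsIso (F.map i ≫ adj.counit.app (F.obj a₀)) ↔
      IsIso (adj.toMonad.free.map i ≫
        adj.toMonad.adj.counit.app (adj.toMonad.free.obj a₀)) := by
  have key : (adj.toMonad.free.map i ≫
        adj.toMonad.adj.counit.app (adj.toMonad.free.obj a₀)).f =
      U.map (F.map i ≫ adj.counit.app (F.obj a₀)) := by
    have hc : (adj.toMonad.adj.counit.app (adj.toMonad.free.obj a₀)).f =
        U.map (adj.counit.app (F.obj a₀)) := by
      rw [Monad.adj_counit]
      rfl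
    rw [U.map_comp]
    exact congrArg (fun t => U.map (F.map i) ≫ t) hc
  constructor
  · intro h
    have : IsIso (adj.toMonad.forget.map (adj.toMonad.free.map i ≫
        adj.toMonad.adj.counit.app (adj.toMonad.free.obj a₀))) := by
      change IsIso (Monad.Algebra.Hom.f _)
      rw [key]
      exact Functor.map_isIso U _
    exact isIso_of_reflects_iso _ adj.toMonad.forget
  · intro h
    apply isIso_of_isIso_map_free adj
    have : IsIso (adj.toMonad.forget.map (adj.toMonad.free.map i ≫
        adj.toMonad.adj.counit.app (adj.toMonad.free.obj a₀))) :=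
      Functor.map_isIso _ _
    change IsIso (Monad.Algebra.Hom.f _) at this
    rw [key] at this
    exact this
end

section
/- Let η, ε : F ⊣ U : B → A be an adjunction, G = (FU, ε, FηU) the induced comonad on B, and b₀ an object of B. For every monomorphism i_a : a → U(b₀) such that ξ_{i_a} = ε_{b₀} ∘ F(i_a) : F(a) → b₀ is an isomorphism, the composite FU(ξ_{i_a}) ∘ F(η_a) ∘ ξ_{i_a}^{-1} : b₀ → FU(b₀) equips b₀ with the structure of a G-coalgebra (it satisfies the counit and coassociativity axioms); moreover this coalgebra structure depends only on the subobject class of i_a. Hence the assignment [(a, i_a)] ↦ FU(ξ_{i_a}) ∘ F(η_a) ∘ ξ_{i_a}^{-1} defines a map Ψ_{F,b₀} : Sub_{A,F}(U(b₀)) → G-coalg(b₀). -/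
open CategoryTheory

/-- Given an adjunction `F ⊣ U`, an object `b₀` and a morphism `i : a ⟶ U(b₀)` such that
`ξ_i := ε_{b₀} ∘ F(i)` is invertible, this is the morphism
`Ψ(i) = FU(ξ_i) ∘ F(η_a) ∘ ξ_i⁻¹ : b₀ ⟶ FU(b₀)`. -/
noncomputable def coalgStr {A : Type*} {B : Type*} [Category A] [Category B]
    (F : A ⥤ B) (U : B ⥤ A) (adj : F ⊣ U) {b₀ : B} {a : A}
    (i : a ⟶ U.obj b₀) (h : IsIso (F.map i ≫ adj.counit.app b₀)) :
    b₀ ⟶ F.obj (U.obj b₀) :=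
  letI := h
  inv (F.map i ≫ adj.counit.app b₀) ≫ F.map (adj.unit.app a) ≫
    F.map (U.map (F.map i ≫ adj.counit.app b₀))

theorem unit_xi {A : Type*} {B : Type*} [Category A] [Category B]
    {F : A ⥤ B} {U : B ⥤ A} (adj : F ⊣ U) {b₀ : B} {a : A} (i : a ⟶ U.obj b₀) :
    adj.unit.app a ≫ U.map (F.map i ≫ adj.counit.app b₀) = i := by
  simp

theorem coalgStr_eq {A : Type*} {B : Type*} [Category A] [Category B]
    {F : A ⥤ B} {U : B ⥤ A} (adj : F ⊣ U) {b₀ : B} {a : A}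
    (i : a ⟶ U.obj b₀) (h : IsIso (F.map i ≫ adj.counit.app b₀)) :
    coalgStr F U adj i h = inv (F.map i ≫ adj.counit.app b₀) ≫ F.map i := by
  unfold coalgStr
  rw [← F.map_comp, unit_xi]

/-- Let `η, ε : F ⊣ U : B → A` be an adjunction, `G = (FU, ε, FηU)` the
induced comonad on `B`, and `b₀ ∈ B`.  For every monomorphism `i : a ⟶ U(b₀)` such that
`ξ_i = ε_{b₀} ∘ F(i) : F(a) ⟶ b₀` is an isomorphism, the composite
`Ψ(i) = FU(ξ_i) ∘ F(η_a) ∘ ξ_i⁻¹ : b₀ ⟶ FU(b₀)` equips `b₀` with the structure of a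
`G`-coalgebra (counit and coassociativity axioms hold), and this coalgebra structure
depends only on the subobject class of `i`.  Hence `[(a,i)] ↦ Ψ(i)` defines a map
`Ψ_{F,b₀} : Sub_{A,F}(U(b₀)) → G-coalg(b₀)`. -/
theorem stmt_5 {A : Type*} {B : Type*} [Category A] [Category B]
    {F : A ⥤ B} {U : B ⥤ A} (adj : F ⊣ U) (b₀ : B) {a : A}
    (i : a ⟶ U.obj b₀) [Mono i]
    (h : IsIso (F.map i ≫ adj.counit.app b₀)) :
    coalgStr F U adj i h ≫ adj.counit.app b₀ = 𝟙 b₀ ∧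
    coalgStr F U adj i h ≫ F.map (adj.unit.app (U.obj b₀)) =
      coalgStr F U adj i h ≫ F.map (U.map (coalgStr F U adj i h)) ∧
    (∀ {a' : A} (i' : a' ⟶ U.obj b₀) [Mono i']
        (h' : IsIso (F.map i' ≫ adj.counit.app b₀)) (e : a' ≅ a),
      e.hom ≫ i = i' → coalgStr F U adj i' h' = coalgStr F U adj i h) := by
  refine ⟨?_, ?_, ?_⟩
  · rw [coalgStr_eq, Category.assoc, IsIso.inv_hom_id]
  · have key : i ≫ U.map (inv (F.map i ≫ adj.counit.app b₀)) = adj.unit.app a := by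
      have := unit_xi adj i
      calc i ≫ U.map (inv (F.map i ≫ adj.counit.app b₀))
          = (adj.unit.app a ≫ U.map (F.map i ≫ adj.counit.app b₀)) ≫
              U.map (inv (F.map i ≫ adj.counit.app b₀)) := by rw [this]
        _ = adj.unit.app a := by
          rw [Category.assoc, ← U.map_comp, IsIso.hom_inv_id, U.map_id]
          exact Category.comp_id _
    rw [coalgStr_eq, Category.assoc, Category.assoc, ← F.map_comp, ← F.map_comp,
      U.map_comp, ← Category.assoc i, key]
    congr 2
    exact adj.unit.naturality i
  · intro a' i' _ h' e he
    subst he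
    rw [coalgStr_eq, coalgStr_eq, IsIso.inv_comp_eq, F.map_comp, Category.assoc, Category.assoc,
      ← Category.assoc (F.map i), IsIso.hom_inv_id_assoc]
end

section
/- Let η_f, ε_f : f ⊣ f* : B → A be an adjunction in a 2-category K, and let C_f = (f f*, δ_f = f η_f f*, ε_f) be the associated B-coring. Then the assignment α ↦ α f ∘ f η_f defines a bijection γ from the set End_B(C_f, C_f) of coring endomorphisms of C_f to the set of coalgebra structures on the 1-cell f over the comonad G^A_{C_f} on K(A,B) (the comonad h ↦ f f* h induced by C_f); its inverse sends a coalgebra structure θ_f : f → f f* f to f f* ε_f ∘ θ_f f*. -/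
open CategoryTheory CategoryTheory.Bicategory

universe w v u

/-- The comultiplication `δ_f = f η_f f*` of the `B`-coring `C_f = f ⊗ f*` associated to
an adjunction `f ⊣ f*` (in Lean conventions `f ⊗ f*` is `g ≫ f`). -/
def coringComul {K : Type u} [Bicategory.{w, v} K] {a b : K} (f : a ⟶ b) (g : b ⟶ a)
    (η : 𝟙 a ⟶ f ≫ g) : g ≫ f ⟶ (g ≫ f) ≫ g ≫ f :=
  (g ◁ ((λ_ f).inv ≫ (η ▷ f) ≫ (α_ f g f).hom)) ≫ (α_ g f (g ≫ f)).inv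

lemma mate_counit_iff {K : Type u} [Bicategory.{w, v} K] {a b : K}
    (f : a ⟶ b) (g : b ⟶ a) (adj : Bicategory.Adjunction f g) (σ : g ≫ f ⟶ g ≫ f) :
    σ ≫ adj.counit = adj.counit ↔
      (adj.homEquiv₁.symm σ) ≫ (f ◁ adj.counit) ≫ (ρ_ f).hom = 𝟙 f := by
  have tri : adj.homEquiv₁.symm adj.counit ≫ (ρ_ f).hom = 𝟙 f := by
    have h := adj.left_triangle
    simp only [leftZigzag, bicategoricalComp] at h
    simp only [Adjunction.homEquiv₁_symm_apply, Category.assoc]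
    have h2 : adj.unit ▷ f ≫ (α_ f g f).hom ≫ f ◁ adj.counit = (λ_ f).hom ≫ (ρ_ f).inv := by
      rw [← h]; bicategory
    rw [reassoc_of% h2]
    simp
  have nat : adj.homEquiv₁.symm (σ ≫ adj.counit) = adj.homEquiv₁.symm σ ≫ f ◁ adj.counit := by
    simp [Adjunction.homEquiv₁_symm_apply]
  rw [← Category.assoc, ← nat, ← tri, cancel_mono, adj.homEquiv₁.symm.apply_eq_iff_eq]

lemma mate_comul_iff {K : Type u} [Bicategory.{w, v} K] {a b : K}
    (f : a ⟶ b) (g : b ⟶ a) (adj : Bicategory.Adjunction f g) (σ : g ≫ f ⟶ g ≫ f) :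
    σ ≫ coringComul f g adj.unit =
        coringComul f g adj.unit ≫ (σ ▷ (g ≫ f)) ≫ ((g ≫ f) ◁ σ) ↔
      (adj.homEquiv₁.symm σ) ≫ (f ◁ coringComul f g adj.unit) ≫
          (α_ f (g ≫ f) (g ≫ f)).inv =
        (adj.homEquiv₁.symm σ) ≫ ((adj.homEquiv₁.symm σ) ▷ (g ≫ f)) := by
  have nat : adj.homEquiv₁.symm (σ ≫ coringComul f g adj.unit) =
      adj.homEquiv₁.symm σ ≫ f ◁ coringComul f g adj.unit := by
    simp [Adjunction.homEquiv₁_symm_apply]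
  have key : adj.homEquiv₁.symm
        (coringComul f g adj.unit ≫ (σ ▷ (g ≫ f)) ≫ ((g ≫ f) ◁ σ)) ≫
          (α_ f (g ≫ f) (g ≫ f)).inv =
      (adj.homEquiv₁.symm σ) ≫ ((adj.homEquiv₁.symm σ) ▷ (g ≫ f)) := by
    simp only [Adjunction.homEquiv₁_symm_apply, coringComul]
    rw [← whisker_exchange σ σ]
    calc _ = (λ_ f).inv ≫ (adj.unit ▷ f) ≫ (α_ f g f).hom ≫ (f ◁ g ◁ (λ_ f).inv) ≫
          (α_ f g (𝟙 a ≫ f)).inv ≫ ((f ≫ g) ◁ (adj.unit ▷ f)) ≫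
          (α_ f g _).hom ≫ f ◁ g ◁ (α_ f g f).hom ≫ f ◁ (α_ g f (g ≫ f)).inv ≫
          f ◁ ((g ≫ f) ◁ σ ≫ σ ▷ (g ≫ f)) ≫ (α_ f (g ≫ f) (g ≫ f)).inv := by bicategory
      _ = (λ_ f).inv ≫ (λ_ (𝟙 a ≫ f)).inv ≫ (𝟙 a ◁ (adj.unit ▷ f) ≫ adj.unit ▷ ((f ≫ g) ≫ f)) ≫
          (α_ f g _).hom ≫ f ◁ g ◁ (α_ f g f).hom ≫ f ◁ (α_ g f (g ≫ f)).inv ≫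
          f ◁ ((g ≫ f) ◁ σ ≫ σ ▷ (g ≫ f)) ≫ (α_ f (g ≫ f) (g ≫ f)).inv := by
            rw [whisker_exchange adj.unit (adj.unit ▷ f)]; bicategory
      _ = (λ_ f).inv ≫ (adj.unit ▷ f) ≫ (α_ f g f).hom ≫ (λ_ _).inv ≫ 
          (α_ (𝟙 a) f (g ≫ f)).inv ≫ (adj.unit ▷ f ▷ (g ≫ f) ≫ ((f ≫ g) ≫ f) ◁ σ) ≫
          (α_ f g f).hom ▷ (g ≫ f) ≫ (f ◁ σ) ▷ (g ≫ f) := by bicategory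
      _ = _ := by
          rw [← whisker_exchange (adj.unit ▷ f) σ]; bicategory
  rw [← key, ← Category.assoc (adj.homEquiv₁.symm σ), ← nat, cancel_mono, adj.homEquiv₁.symm.apply_eq_iff_eq]

/-- Let `η_f, ε_f : f ⊣ f* : B → A` be an adjunction in a 2-category
`K`, and `C_f = (f f*, δ_f = f η_f f*, ε_f)` the associated `B`-coring.  Then the
assignment `α ↦ α f ∘ f η_f` defines a bijection `γ` from the set `End_B(C_f, C_f)` of
coring endomorphisms of `C_f` to the set of coalgebra structures on the 1-cell `f` over
the comonad `G^A_{C_f} : h ↦ f f* h` induced by `C_f` on `K(A,B)`; its inverse sends a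
coalgebra structure `θ : f → f f* f` to `f f* ε_f ∘ θ f*`. -/
theorem stmt_12 {K : Type u} [Bicategory.{w, v} K] [Bicategory.Strict K] {a b : K}
    (f : a ⟶ b) (g : b ⟶ a) (adj : Bicategory.Adjunction f g) :
    ∃ e : {σ : g ≫ f ⟶ g ≫ f //
            σ ≫ adj.counit = adj.counit ∧
            σ ≫ coringComul f g adj.unit =
              coringComul f g adj.unit ≫ (σ ▷ (g ≫ f)) ≫ ((g ≫ f) ◁ σ)} ≃
          {θ : f ⟶ f ≫ g ≫ f //
            θ ≫ (f ◁ adj.counit) ≫ (ρ_ f).hom = 𝟙 f ∧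
            θ ≫ (f ◁ coringComul f g adj.unit) ≫ (α_ f (g ≫ f) (g ≫ f)).inv =
              θ ≫ (θ ▷ (g ≫ f))},
      (∀ σ, (e σ).1 =
        (λ_ f).inv ≫ (adj.unit ▷ f) ≫ (α_ f g f).hom ≫ (f ◁ σ.1)) ∧
      (∀ θ, (e.symm θ).1 =
        (g ◁ θ.1) ≫ (α_ g f (g ≫ f)).inv ≫ (adj.counit ▷ (g ≫ f)) ≫
          (λ_ (g ≫ f)).hom) := by
  refine ⟨(adj.homEquiv₁ (g := f) (h := g ≫ f)).symm.subtypeEquiv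
    (fun σ => and_congr (mate_counit_iff f g adj σ) (mate_comul_iff f g adj σ)), ?_, ?_⟩
  · intro σ
    simp [Adjunction.homEquiv₁_symm_apply]
  · intro θ
    simp [Adjunction.homEquiv₁_apply]
end

section
/- Let η_f, ε_f : f ⊣ f* : B → A be an adjunction in a bicategory B. The following are equivalent: (i) f is separable, i.e. η_f : 1_A → f* ⊗ f is a split monomorphism in B(A,A); (ii) the A-ring S_f = (f* ⊗ f, η_f, m_f) is split, i.e. its unit is a split monomorphism; (iii) for each 0-cell C, the unit of the adjunction B(C,f) ⊣ B(C,f*) : B(C,B) → B(C,A) is a split monomorphism (the functor B(C,f) is separable); (iv) for each 0-cell C, the unit of the adjunction B(f*,C) ⊣ B(f,C) : B(B,C) → B(A,C) is a split monomorphism (the functor B(f*,C) is separable). -/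
open CategoryTheory CategoryTheory.Bicategory

universe w v u

variable {B : Type u} [Bicategory.{w, v} B]

/-- The functor `𝔹(c, f) = f ⊗ - : 𝔹(c, a) ⥤ 𝔹(c, b)` given by horizontal composition
with a 1-cell `f : a ⟶ b`. -/
@[simps]
def postcompF {a b : B} (c : B) (f : a ⟶ b) : (c ⟶ a) ⥤ (c ⟶ b) where
  obj h := h ≫ f
  map θ := θ ▷ f

/-- The functor `𝔹(f, c) = - ⊗ f : 𝔹(b, c) ⥤ 𝔹(a, c)` given by horizontal composition
with a 1-cell `f : a ⟶ b`. -/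
@[simps]
def precompF {a b : B} (c : B) (f : a ⟶ b) : (b ⟶ c) ⥤ (a ⟶ c) where
  obj h := f ≫ h
  map θ := f ◁ θ

/-- Let `η_f, ε_f : f ⊣ f* : B → A` be an adjunction in a bicategory
`𝔹`.  The following are equivalent:
(i) `f` is separable, i.e. `η_f : 1_A → f* ⊗ f` is a split monomorphism in `𝔹(A,A)`;
(ii) the `A`-ring `S_f = (f* ⊗ f, η_f, m_f)` is split, i.e. its unit (which is `η_f`) is
a split monomorphism;
(iii) for each 0-cell `C`, the unit of the adjunction
`𝔹(C,f) ⊣ 𝔹(C,f*) : 𝔹(C,B) → 𝔹(C,A)` is a split monomorphism, i.e. it admits a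
natural retraction (`𝔹(C,f)` is separable);
(iv) for each 0-cell `C`, the unit of the adjunction
`𝔹(f*,C) ⊣ 𝔹(f,C) : 𝔹(B,C) → 𝔹(A,C)` is a split monomorphism, i.e. it admits a
natural retraction (`𝔹(f*,C)` is separable). -/
theorem stmt_19 {B : Type u} [Bicategory.{w, v} B] {a b : B}
    (f : a ⟶ b) (g : b ⟶ a) (adj : Bicategory.Adjunction f g) :
    [ IsSplitMono adj.unit,
      IsSplitMono adj.unit,
      ∀ c : B, ∃ ν : postcompF c f ⋙ postcompF c g ⟶ 𝟭 (c ⟶ a),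
        ∀ h : c ⟶ a,
          ((ρ_ h).inv ≫ (h ◁ adj.unit) ≫ (α_ h f g).inv) ≫ ν.app h = 𝟙 h,
      ∀ c : B, ∃ ν : precompF c g ⋙ precompF c f ⟶ 𝟭 (a ⟶ c),
        ∀ h : a ⟶ c,
          ((λ_ h).inv ≫ (adj.unit ▷ h) ≫ (α_ f g h).hom) ≫ ν.app h = 𝟙 h ].TFAE := by
  tfae_have 1 ↔ 2 := Iff.rfl
  tfae_have 1 → 3 := by
    rintro ⟨⟨⟨r, hr⟩⟩⟩ c
    refine ⟨{ app := fun h => (α_ h f g).hom ≫ h ◁ r ≫ (ρ_ h).hom, naturality := ?_ }, ?_⟩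
    · intro x y θ
      have e : (θ ▷ f) ▷ g ≫ (α_ y f g).hom ≫ y ◁ r ≫ (ρ_ y).hom
          = ((α_ x f g).hom ≫ x ◁ r ≫ (ρ_ x).hom) ≫ θ := by
        rw [associator_naturality_left_assoc, ← whisker_exchange_assoc]
        simp
      exact e
    · intro h
      have e : ((ρ_ h).inv ≫ h ◁ adj.unit ≫ (α_ h f g).inv) ≫
          (α_ h f g).hom ≫ h ◁ r ≫ (ρ_ h).hom = 𝟙 h := by
        simp [← whiskerLeft_comp_assoc, hr]
      exact e
  tfae_have 1 → 4 := by
    rintro ⟨⟨⟨r, hr⟩⟩⟩ c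
    refine ⟨{ app := fun h => (α_ f g h).inv ≫ r ▷ h ≫ (λ_ h).hom, naturality := ?_ }, ?_⟩
    · intro x y θ
      have e : f ◁ (g ◁ θ) ≫ (α_ f g y).inv ≫ r ▷ y ≫ (λ_ y).hom
          = ((α_ f g x).inv ≫ r ▷ x ≫ (λ_ x).hom) ≫ θ := by
        rw [associator_inv_naturality_right_assoc, whisker_exchange_assoc]
        simp
      exact e
    · intro h
      have e : ((λ_ h).inv ≫ adj.unit ▷ h ≫ (α_ f g h).hom) ≫
          (α_ f g h).inv ≫ r ▷ h ≫ (λ_ h).hom = 𝟙 h := by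
        simp [← comp_whiskerRight_assoc, hr]
      exact e
  tfae_have 3 → 1 := by
    intro H
    obtain ⟨ν, hν⟩ := H a
    refine ⟨⟨⟨(λ_ f).inv ▷ g ≫ ν.app (𝟙 a), ?_⟩⟩⟩
    have key : (ρ_ (𝟙 a)).inv ≫ (𝟙 a ◁ adj.unit) ≫ (α_ (𝟙 a) f g).inv
        = adj.unit ≫ (λ_ f).inv ▷ g := by
      rw [← unitors_inv_equal]
      simp
    have h := hν (𝟙 a)
    rw [key] at h
    exact (Category.assoc _ _ _).symm.trans h
  tfae_have 4 → 1 := by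
    intro H
    obtain ⟨ν, hν⟩ := H a
    refine ⟨⟨⟨f ◁ (ρ_ g).inv ≫ ν.app (𝟙 a), ?_⟩⟩⟩
    have key : (λ_ (𝟙 a)).inv ≫ (adj.unit ▷ 𝟙 a) ≫ (α_ f g (𝟙 a)).hom
        = adj.unit ≫ f ◁ (ρ_ g).inv := by
      simp [unitors_inv_equal]
    have h := hν (𝟙 a)
    rw [key] at h
    exact (Category.assoc _ _ _).symm.trans h
  tfae_finish
end
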